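/- arXiv:2008.08675 — 2 statements merged into one kernel-verified Lean document; each statement's English description precedes it below -/
import Mathlib

section
/- Let f be a deep linear fully connected network of depth d and width n, and set K_{ab} = ⟨x_a, x_b⟩ / d_0 for inputs x_1, x_2, x_3, x_4 ∈ ℝ^{d_0}. Then there exists a constant K, independent of n, such that | E_θ[f(x_1) f(x_2) f(x_3) f(x_4)] − (K_{12}K_{34} + K_{13}K_{24} + K_{14}K_{23}) | ≤ K / n for all n ≥ 1. -/
open MeasureTheory ProbabilityTheory

namespace DeepLinearFC

/-- Parameter index type for a deep linear fully connected network of depth `d` and width `n`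
on inputs in `ℝ^{d0}`: the readout vector `v` (`Fin n`), the first-layer matrix `W^(1)`
(`Fin n × Fin d0`), and the higher-layer matrices `W^(2), …, W^(d)`
(`Fin (d-1) × Fin n × Fin n`). -/
abbrev Param (d0 d n : ℕ) : Type :=
  Fin n ⊕ (Fin n × Fin d0) ⊕ (Fin (d - 1) × Fin n × Fin n)

/-- Hidden activations: `hidden d0 d n θ x ℓ` is `W^(ℓ+1) ⋯ W^(2) W^(1) x`. -/
def hidden (d0 d n : ℕ) (θ : Param d0 d n → ℝ) (x : Fin d0 → ℝ) : ℕ → Fin n → ℝ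
  | 0 => fun i => ∑ j : Fin d0, θ (.inr (.inl (i, j))) * x j
  | ℓ + 1 => fun i => ∑ j : Fin n,
      (if h : ℓ < d - 1 then θ (.inr (.inr (⟨ℓ, h⟩, i, j))) else 0) * hidden d0 d n θ x ℓ j

/-- The deep linear fully connected network
`f(x) = n^{-d/2} d0^{-1/2} vᵀ W^(d) ⋯ W^(2) W^(1) x`. -/
noncomputable def net (d0 d n : ℕ) (θ : Param d0 d n → ℝ) (x : Fin d0 → ℝ) : ℝ :=
  (Real.sqrt ((n : ℝ) ^ d * (d0 : ℝ)))⁻¹ *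
    ∑ i : Fin n, θ (.inl i) * hidden d0 d n θ x (d - 1) i

/-- All parameters are i.i.d. standard Gaussians. -/
noncomputable def gaussParam (d0 d n : ℕ) : Measure (Param d0 d n → ℝ) :=
  Measure.pi fun _ => gaussianReal 0 1

/-- The neural tangent kernel `Θ(x,x') = Σ_μ ∂f(x)/∂θ_μ ⬝ ∂f(x')/∂θ_μ`. -/
noncomputable def NTK (d0 d n : ℕ) (θ : Param d0 d n → ℝ) (x x' : Fin d0 → ℝ) : ℝ :=
  ∑ μ : Param d0 d n,
    fderiv ℝ (fun θ' => net d0 d n θ' x) θ (Pi.single μ 1) *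
    fderiv ℝ (fun θ' => net d0 d n θ' x') θ (Pi.single μ 1)

/-- The two-point kernel `K_{ab} = ⟨x_a, x_b⟩ / d0`. -/
noncomputable def Kker (d0 : ℕ) (x x' : Fin d0 → ℝ) : ℝ :=
  (∑ j : Fin d0, x j * x' j) / (d0 : ℝ)

lemma gauss_deriv_aux (p p' : ℝ → ℝ) (hp : ∀ t, HasDerivAt p (p' t) t) :
    deriv (fun t => p t * Real.exp (t ^ 2 / 2)) =
      fun t => (p' t + p t * t) * Real.exp (t ^ 2 / 2) := by
  ext t
  have h1 : HasDerivAt (fun t : ℝ => t ^ 2 / 2) t t := by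
    have := ((hasDerivAt_id t).pow 2).div_const 2
    convert! this using 1
    simp
  have := ((hp t).mul h1.exp).deriv
  refine Eq.trans this ?_
  ring

/-- Moments of the standard Gaussian. -/
noncomputable def mom (k : ℕ) : ℝ := ∫ x, x ^ k ∂(gaussianReal 0 1)

lemma mom_eq (k : ℕ) : mom k = iteratedDeriv k (fun t : ℝ => 1 * Real.exp (t ^ 2 / 2)) 0 := by
  have h := iteratedDeriv_mgf_zero (X := fun x : ℝ => x) (μ := gaussianReal 0 1) (by simp) k
  rw [mgf_fun_id_gaussianReal] at h
  simp only [zero_mul, zero_add, NNReal.coe_one, one_mul] at h ⊢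
  rw [h]; rfl

lemma mom_zero : mom 0 = 1 := by simp [mom]
lemma mom_vals : mom 1 = 0 ∧ mom 2 = 1 ∧ mom 4 = 3 := by
  have d1 := gauss_deriv_aux (fun _ => 1) (fun _ => 0) (fun t => hasDerivAt_const _ _)
  have d2 := gauss_deriv_aux (fun t => 0 + 1 * t) (fun _ => 1)
    (fun t => by simpa only [zero_add, one_mul] using hasDerivAt_id' t)
  have d3 := gauss_deriv_aux (fun t => 1 + (0 + 1 * t) * t) (fun t => 2 * t)
    (fun t => by
      convert! ((hasDerivAt_id t).pow 2).const_add 1 using 1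
      · ext; simp; ring
      · simp)
  have d4 := gauss_deriv_aux (fun t => 2 * t + (1 + (0 + 1 * t) * t) * t) (fun t => 3 + 3 * t ^ 2)
    (fun t => by
      convert! ((hasDerivAt_id t).const_mul 3).add ((hasDerivAt_id t).pow 3) using 1
      · ext; simp; ring
      · simp)
  simp only [mom_eq, iteratedDeriv_succ, iteratedDeriv_zero, d1, d2, d3, d4]
  norm_num

lemma mom_integrable (k : ℕ) : Integrable (fun x : ℝ => x ^ k) (gaussianReal 0 1) := by
  have h := (memLp_id_gaussianReal (μ := 0) (v := 1) (k : NNReal))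
  have h2 : MemLp (id : ℝ → ℝ) k (gaussianReal 0 1) := by exact_mod_cast h
  have h3 := h2.integrable_norm_pow'
  refine (integrable_norm_iff (by fun_prop)).1 ?_
  simpa using h3

section Wick
variable {P : Type*} [Fintype P] [DecidableEq P]

/-- Multiplicity of `s` among four indices. -/
def cnt (a b c e s : P) : ℕ :=
  (if s = a then 1 else 0) + (if s = b then 1 else 0) + (if s = c then 1 else 0)
    + (if s = e then 1 else 0)

/-- Wick pairing weight. -/
def wick (a b c e : P) : ℝ :=
  (if a = b then 1 else 0) * (if c = e then 1 else 0)
    + (if a = c then 1 else 0) * (if b = e then 1 else 0)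
    + (if a = e then 1 else 0) * (if b = c then 1 else 0)

lemma prod_four (θ : P → ℝ) (a b c e : P) :
    θ a * θ b * θ c * θ e = ∏ s, θ s ^ cnt a b c e s := by
  simp only [cnt, pow_add, Finset.prod_mul_distrib]
  simp

lemma prod_mom (a b c e : P) : ∏ s, mom (cnt a b c e s) = wick a b c e := by
  obtain ⟨m1, m2, m4⟩ := mom_vals
  have m0 := mom_zero
  have z : ∀ s, cnt a b c e s = 1 → ∏ s, mom (cnt a b c e s) = 0 := fun s hs =>
    Finset.prod_eq_zero (Finset.mem_univ s) (by rw [hs, m1])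
  have z3 : ∀ s, cnt a b c e s = 1 → wick a b c e = 0 := by
    intro s hs
    unfold cnt at hs
    unfold wick
    grind
  by_cases h : ∃ s, cnt a b c e s = 1
  · obtain ⟨s, hs⟩ := h
    rw [z s hs, z3 s hs]
  push Not at h
  have ha := h a
  have hb := h b
  have hc := h c
  have he := h e
  by_cases hall : a = b ∧ a = c ∧ a = e
  · obtain ⟨rfl, rfl, rfl⟩ := hall
    rw [Finset.prod_eq_single a]
    · simp [cnt, wick, m4]; norm_num
    · intro s _ hs
      simp [cnt, hs, m0]
    · simp
  · have h1 : wick a b c e = 1 := by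
      unfold cnt at ha hb hc he
      unfold wick
      grind
    rw [h1]
    refine Finset.prod_eq_one fun s _ => ?_
    have : cnt a b c e s = 0 ∨ cnt a b c e s = 2 := by
      have hs := h s
      unfold cnt at *
      grind
    rcases this with h | h <;> rw [h] <;> assumption

/-- i.i.d. standard Gaussian measure. -/
noncomputable abbrev gm (P : Type*) [Fintype P] : Measure (P → ℝ) :=
  Measure.pi fun _ => gaussianReal 0 1

lemma wick_integral (a b c e : P) :
    ∫ θ, θ a * θ b * θ c * θ e ∂(gm P) = wick a b c e := by
  simp_rw [prod_four]
  rw [integral_fintype_prod_eq_prod (fun s (x : ℝ) => x ^ cnt a b c e s), ← prod_mom]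
  rfl

lemma wick_integrable (a b c e : P) :
    Integrable (fun θ : P → ℝ => θ a * θ b * θ c * θ e) (gm P) := by
  simp_rw [prod_four]
  exact Integrable.fintype_prod (f := fun s (x : ℝ) => x ^ cnt a b c e s)
    (fun s => mom_integrable _)

lemma indep_of_disjoint {F G : (P → ℝ) → ℝ} (mF : Measurable F) (mG : Measurable G)
    {S T : Set P} (hST : Disjoint S T) (hF : DependsOn F S) (hG : DependsOn G T) :
    IndepFun F G (gm P) := by
  classical
  have hi : iIndepFun (fun (i : P) (ω : P → ℝ) => ω i) (gm P) :=
    iIndepFun_pi (X := fun _ x => x) (fun i => aemeasurable_id)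
  have h := hi.indepFun_finset S.toFinset T.toFinset (by simpa using hST)
    (fun i => measurable_pi_apply i)
  have key : ∀ (H : (P → ℝ) → ℝ) (U : Set P), DependsOn H U →
      H = (fun y : U.toFinset → ℝ => H (fun i => if h : i ∈ U.toFinset then y ⟨i, h⟩ else 0)) ∘
        (fun (ω : P → ℝ) (i : U.toFinset) => ω i) := by
    intro H U hH
    ext ω
    refine hH fun i hi => ?_
    simp [hi]
  have km : ∀ (H : (P → ℝ) → ℝ) (U : Set P), Measurable H →
      Measurable (fun y : U.toFinset → ℝ =>
        H (fun i => if h : i ∈ U.toFinset then y ⟨i, h⟩ else 0)) := by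
    intro H U hH
    refine hH.comp (measurable_pi_lambda _ fun i => ?_)
    by_cases h : i ∈ U.toFinset
    · simp only [h, dite_true]; exact measurable_pi_apply _
    · simp only [h, dite_false]; exact measurable_const
  rw [key F S hF, key G T hG]
  exact h.comp (km F S mF) (km G T mG)

end Wick

section Step
variable {P : Type*} [Fintype P] [DecidableEq P]

/-- The three full contractions of a 4-tensor. -/
def cA {ι : Type*} [Fintype ι] (Q : ι → ι → ι → ι → ℝ) : ℝ := ∑ i, ∑ k, Q i i k k
/-- Second contraction. -/
def cB {ι : Type*} [Fintype ι] (Q : ι → ι → ι → ι → ℝ) : ℝ := ∑ i, ∑ j, Q i j i j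
/-- Third contraction. -/
def cC {ι : Type*} [Fintype ι] (Q : ι → ι → ι → ι → ℝ) : ℝ := ∑ i, ∑ j, Q i j j i

/-- Output tensor built from Kronecker deltas. -/
def outT {κ : Type*} [DecidableEq κ] (A B C : ℝ) (p q r s : κ) : ℝ :=
  (if p = q then 1 else 0) * (if r = s then 1 else 0) * A
    + (if p = r then 1 else 0) * (if q = s then 1 else 0) * B
    + (if p = s then 1 else 0) * (if q = r then 1 else 0) * C

lemma sum_wick {ι κ : Type*} [Fintype ι] [DecidableEq ι] [DecidableEq κ]
    (emb : κ → ι → P) (hinj : ∀ p i q j, emb p i = emb q j ↔ p = q ∧ i = j)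
    (Q : ι → ι → ι → ι → ℝ) (p q r s : κ) :
    ∑ i, ∑ j, ∑ k, ∑ l, wick (emb p i) (emb q j) (emb r k) (emb s l) * Q i j k l
      = outT (cA Q) (cB Q) (cC Q) p q r s := by
  have hite : ∀ (a b : Prop) [Decidable a] [Decidable b],
      (if a ∧ b then (1:ℝ) else 0) = (if a then 1 else 0) * (if b then 1 else 0) := by
    intro a b _ _; by_cases a <;> by_cases b <;> simp [*]
  have hA : cA Q = ∑ i, ∑ j, ∑ k, ∑ l, (if i = j then (1:ℝ) else 0) * (if k = l then 1 else 0)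
      * Q i j k l := by
    simp [cA]
  have hB : cB Q = ∑ i, ∑ j, ∑ k, ∑ l, (if i = k then (1:ℝ) else 0) * (if j = l then 1 else 0)
      * Q i j k l := by
    simp [cB]
  have hC : cC Q = ∑ i, ∑ j, ∑ k, ∑ l, (if i = l then (1:ℝ) else 0) * (if j = k then 1 else 0)
      * Q i j k l := by
    simp [cC]
  rw [hA, hB, hC]
  unfold outT wick
  simp only [hinj, hite, Finset.mul_sum, ← Finset.sum_add_distrib]
  refine Finset.sum_congr rfl fun i _ => Finset.sum_congr rfl fun j _ =>
    Finset.sum_congr rfl fun k _ => Finset.sum_congr rfl fun l _ => ?_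
  ring

lemma outT_sum {κ : Type*} [Fintype κ] [DecidableEq κ] (A B C : ℝ) :
    cA (outT A B C (κ := κ)) + cB (outT A B C (κ := κ)) + cC (outT A B C (κ := κ)) =
      ((Fintype.card κ : ℝ) ^ 2 + 2 * Fintype.card κ) * (A + B + C) := by
  simp [cA, cB, cC, outT, Finset.sum_add_distrib, ← Finset.sum_mul, Finset.card_univ]
  ring

lemma step {ι κ : Type*} [Fintype ι] [DecidableEq ι] [DecidableEq κ]
    (emb : κ → ι → P) (hinj : ∀ p i q j, emb p i = emb q j ↔ p = q ∧ i = j)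
    (T : Set P) (hT : ∀ p i, emb p i ∉ T) (g₁ g₂ g₃ g₄ : (P → ℝ) → ι → ℝ)
    (m₁ : ∀ i, Measurable (fun θ => g₁ θ i)) (m₂ : ∀ i, Measurable (fun θ => g₂ θ i))
    (m₃ : ∀ i, Measurable (fun θ => g₃ θ i)) (m₄ : ∀ i, Measurable (fun θ => g₄ θ i))
    (d₁ : ∀ i, DependsOn (fun θ => g₁ θ i) T) (d₂ : ∀ i, DependsOn (fun θ => g₂ θ i) T)
    (d₃ : ∀ i, DependsOn (fun θ => g₃ θ i) T) (d₄ : ∀ i, DependsOn (fun θ => g₄ θ i) T)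
    (hint : ∀ i j k l, Integrable (fun θ => g₁ θ i * g₂ θ j * g₃ θ k * g₄ θ l) (gm P))
    (Q : ι → ι → ι → ι → ℝ)
    (hQ : ∀ i j k l, ∫ θ, g₁ θ i * g₂ θ j * g₃ θ k * g₄ θ l ∂(gm P) = Q i j k l)
    (p q r s : κ) :
    Integrable (fun θ => (∑ i, θ (emb p i) * g₁ θ i) * (∑ i, θ (emb q i) * g₂ θ i)
      * (∑ i, θ (emb r i) * g₃ θ i) * (∑ i, θ (emb s i) * g₄ θ i)) (gm P) ∧
    ∫ θ, (∑ i, θ (emb p i) * g₁ θ i) * (∑ i, θ (emb q i) * g₂ θ i)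
      * (∑ i, θ (emb r i) * g₃ θ i) * (∑ i, θ (emb s i) * g₄ θ i) ∂(gm P)
      = outT (cA Q) (cB Q) (cC Q) p q r s := by
  have hexp : ∀ θ : P → ℝ, (∑ i, θ (emb p i) * g₁ θ i) * (∑ i, θ (emb q i) * g₂ θ i)
      * (∑ i, θ (emb r i) * g₃ θ i) * (∑ i, θ (emb s i) * g₄ θ i) =
      ∑ i, ∑ j, ∑ k, ∑ l, (θ (emb p i) * θ (emb q j) * θ (emb r k) * θ (emb s l)) *
        (g₁ θ i * g₂ θ j * g₃ θ k * g₄ θ l) := by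
    intro θ
    rw [Finset.sum_mul_sum, Finset.sum_mul, Finset.sum_mul]
    refine Finset.sum_congr rfl fun i _ => ?_
    rw [Finset.sum_mul, Finset.sum_mul]
    refine Finset.sum_congr rfl fun j _ => ?_
    rw [mul_assoc, Finset.sum_mul_sum, Finset.mul_sum]
    refine Finset.sum_congr rfl fun k _ => ?_
    rw [Finset.mul_sum]
    exact Finset.sum_congr rfl fun l _ => by ring
  have hind : ∀ i j k l, IndepFun
      (fun θ : P → ℝ => θ (emb p i) * θ (emb q j) * θ (emb r k) * θ (emb s l))
      (fun θ => g₁ θ i * g₂ θ j * g₃ θ k * g₄ θ l) (gm P) := by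
    intro i j k l
    refine indep_of_disjoint (by fun_prop) ((((m₁ i).mul (m₂ j)).mul (m₃ k)).mul (m₄ l))
      (S := Tᶜ) (T := T) disjoint_compl_left ?_ ?_
    · intro x y h
      simp only [h _ (hT _ _)]
    · intro x y h
      simp only [d₁ i h, d₂ j h, d₃ k h, d₄ l h]
  have hti : ∀ i j k l, Integrable (fun θ : P → ℝ =>
      (θ (emb p i) * θ (emb q j) * θ (emb r k) * θ (emb s l)) *
        (g₁ θ i * g₂ θ j * g₃ θ k * g₄ θ l)) (gm P) := fun i j k l =>
    (hind i j k l).integrable_mul (wick_integrable _ _ _ _) (hint i j k l)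
  simp_rw [hexp]
  constructor
  · exact integrable_finsetSum _ fun i _ => integrable_finsetSum _ fun j _ =>
      integrable_finsetSum _ fun k _ => integrable_finsetSum _ fun l _ => hti i j k l
  · rw [← sum_wick emb hinj Q]
    rw [integral_finsetSum _ fun i _ => integrable_finsetSum _ fun j _ =>
      integrable_finsetSum _ fun k _ => integrable_finsetSum _ fun l _ => hti i j k l]
    refine Finset.sum_congr rfl fun i _ => ?_
    rw [integral_finsetSum _ fun j _ =>
      integrable_finsetSum _ fun k _ => integrable_finsetSum _ fun l _ => hti i j k l]
    refine Finset.sum_congr rfl fun j _ => ?_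
    rw [integral_finsetSum _ fun k _ => integrable_finsetSum _ fun l _ => hti i j k l]
    refine Finset.sum_congr rfl fun k _ => ?_
    rw [integral_finsetSum _ fun l _ => hti i j k l]
    refine Finset.sum_congr rfl fun l _ => ?_
    rw [(hind i j k l).integral_fun_mul_eq_mul_integral
      (wick_integrable _ _ _ _).aestronglyMeasurable (hint i j k l).aestronglyMeasurable,
      wick_integral, hQ]

end Step

lemma hidden_measurable (d0 d n : ℕ) (x : Fin d0 → ℝ) (ℓ : ℕ) :
    ∀ i, Measurable (fun θ => hidden d0 d n θ x ℓ i) := by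
  induction ℓ with
  | zero => intro i; simp only [hidden]; fun_prop
  | succ ℓ ih =>
    intro i
    simp only [hidden]
    refine Finset.measurable_sum _ fun j _ => Measurable.mul ?_ (ih j)
    split_ifs <;> fun_prop

/-- Parameters of layers up to `ℓ`. -/
def layers (d0 d n ℓ : ℕ) : Set (Param d0 d n) :=
  {a | (∃ b, a = .inr (.inl b)) ∨ ∃ m i j, m.1 < ℓ ∧ a = .inr (.inr (m, i, j))}

lemma hidden_dependsOn (d0 d n : ℕ) (x : Fin d0 → ℝ) (ℓ : ℕ) :
    ∀ i, DependsOn (fun θ => hidden d0 d n θ x ℓ i) (layers d0 d n ℓ) := by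
  induction ℓ with
  | zero =>
    intro i θ θ' h
    simp only [hidden]
    refine Finset.sum_congr rfl fun j _ => ?_
    rw [h _ (Or.inl ⟨_, rfl⟩)]
  | succ ℓ ih =>
    intro i θ θ' h
    simp only [hidden]
    refine Finset.sum_congr rfl fun j _ => ?_
    have e : hidden d0 d n θ x ℓ j = hidden d0 d n θ' x ℓ j := ih j fun a ha => h a (by
      rcases ha with ha | ⟨m, i, j, hm, ha⟩
      · exact Or.inl ha
      · exact Or.inr ⟨m, i, j, by omega, ha⟩)
    rw [e]
    congr 1
    split_ifs with hl
    · exact h _ (Or.inr ⟨⟨ℓ, hl⟩, i, j, by simp, rfl⟩)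
    · rfl

lemma hidden_moment (d0 d n : ℕ) (x₁ x₂ x₃ x₄ : Fin d0 → ℝ) (ℓ : ℕ) (hℓ : ℓ ≤ d - 1) :
    ∃ A B C : ℝ,
      A + B + C = ((n : ℝ) ^ 2 + 2 * n) ^ ℓ *
        (cA (fun i j k l => x₁ i * x₂ j * x₃ k * x₄ l)
          + cB (fun i j k l => x₁ i * x₂ j * x₃ k * x₄ l)
          + cC (fun i j k l => x₁ i * x₂ j * x₃ k * x₄ l)) ∧
      ∀ p q r s : Fin n,
        Integrable (fun θ => hidden d0 d n θ x₁ ℓ p * hidden d0 d n θ x₂ ℓ q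
          * hidden d0 d n θ x₃ ℓ r * hidden d0 d n θ x₄ ℓ s) (gm (Param d0 d n)) ∧
        ∫ θ, hidden d0 d n θ x₁ ℓ p * hidden d0 d n θ x₂ ℓ q
          * hidden d0 d n θ x₃ ℓ r * hidden d0 d n θ x₄ ℓ s ∂(gm (Param d0 d n))
          = outT A B C p q r s := by
  induction ℓ with
  | zero =>
    refine ⟨_, _, _, by rw [pow_zero, one_mul], fun p q r s => ?_⟩
    exact step (P := Param d0 d n) (fun (p : Fin n) (i : Fin d0) => .inr (.inl (p, i)))
      (by simp) ∅ (by simp) (fun _ => x₁) (fun _ => x₂) (fun _ => x₃) (fun _ => x₄)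
      (fun _ => measurable_const) (fun _ => measurable_const)
      (fun _ => measurable_const) (fun _ => measurable_const)
      (fun _ _ _ _ => rfl) (fun _ _ _ _ => rfl) (fun _ _ _ _ => rfl) (fun _ _ _ _ => rfl)
      (fun _ _ _ _ => integrable_const _) _ (fun _ _ _ _ => by simp) p q r s
  | succ ℓ ih =>
    obtain ⟨A, B, C, hs, h⟩ := ih (by omega)
    refine ⟨cA (outT A B C (κ := Fin n)), cB (outT A B C (κ := Fin n)),
      cC (outT A B C (κ := Fin n)), ?_, fun p q r s => ?_⟩
    · rw [outT_sum, hs, Fintype.card_fin]; ring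
    have hl : ℓ < d - 1 := by omega
    have := step (P := Param d0 d n)
      (fun (p : Fin n) (i : Fin n) => .inr (.inr (⟨ℓ, hl⟩, p, i)))
      (by simp) (layers d0 d n ℓ) (by
        rintro p i (⟨b, hb⟩ | ⟨m, i, j, hm, hb⟩)
        · simp at hb
        · simp only [Sum.inr.injEq, Prod.mk.injEq] at hb
          rw [← hb.1] at hm
          simp at hm)
      _ _ _ _
      (hidden_measurable d0 d n x₁ ℓ) (hidden_measurable d0 d n x₂ ℓ)
      (hidden_measurable d0 d n x₃ ℓ) (hidden_measurable d0 d n x₄ ℓ)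
      (hidden_dependsOn d0 d n x₁ ℓ) (hidden_dependsOn d0 d n x₂ ℓ)
      (hidden_dependsOn d0 d n x₃ ℓ) (hidden_dependsOn d0 d n x₄ ℓ)
      (fun i j k l => (h i j k l).1) _ (fun i j k l => (h i j k l).2) p q r s
    simpa only [hidden, hl, dite_true] using this

lemma contraction_sum (d0 : ℕ) (x₁ x₂ x₃ x₄ : Fin d0 → ℝ) (hd0 : 0 < d0) :
    cA (fun i j k l => x₁ i * x₂ j * x₃ k * x₄ l)
      + cB (fun i j k l => x₁ i * x₂ j * x₃ k * x₄ l)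
      + cC (fun i j k l => x₁ i * x₂ j * x₃ k * x₄ l) =
    (d0 : ℝ) ^ 2 * (Kker d0 x₁ x₂ * Kker d0 x₃ x₄ + Kker d0 x₁ x₃ * Kker d0 x₂ x₄
              + Kker d0 x₁ x₄ * Kker d0 x₂ x₃) := by
  have h0 : (d0 : ℝ) ≠ 0 := by positivity
  have hA : cA (fun i j k l => x₁ i * x₂ j * x₃ k * x₄ l) =
      (∑ j, x₁ j * x₂ j) * (∑ j, x₃ j * x₄ j) := by
    rw [Finset.sum_mul_sum]; unfold cA
    exact Finset.sum_congr rfl fun i _ => Finset.sum_congr rfl fun j _ => by ring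
  have hB : cB (fun i j k l => x₁ i * x₂ j * x₃ k * x₄ l) =
      (∑ j, x₁ j * x₃ j) * (∑ j, x₂ j * x₄ j) := by
    rw [Finset.sum_mul_sum]; unfold cB
    exact Finset.sum_congr rfl fun i _ => Finset.sum_congr rfl fun j _ => by ring
  have hC : cC (fun i j k l => x₁ i * x₂ j * x₃ k * x₄ l) =
      (∑ j, x₁ j * x₄ j) * (∑ j, x₂ j * x₃ j) := by
    rw [Finset.sum_mul_sum]; unfold cC
    exact Finset.sum_congr rfl fun i _ => Finset.sum_congr rfl fun j _ => by ring
  rw [hA, hB, hC]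
  unfold Kker
  field_simp

/-- Exact four-point function. -/
lemma four_point_exact (d0 d n : ℕ) (hd0 : 0 < d0) (hd : 1 ≤ d) (hn : 1 ≤ n)
    (x₁ x₂ x₃ x₄ : Fin d0 → ℝ) :
    ∫ θ, net d0 d n θ x₁ * net d0 d n θ x₂ * net d0 d n θ x₃ * net d0 d n θ x₄
            ∂(gaussParam d0 d n) =
      (1 + 2 / (n : ℝ)) ^ d * (Kker d0 x₁ x₂ * Kker d0 x₃ x₄ + Kker d0 x₁ x₃ * Kker d0 x₂ x₄
              + Kker d0 x₁ x₄ * Kker d0 x₂ x₃) := by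
  obtain ⟨A, B, C, hs, h⟩ := hidden_moment d0 d n x₁ x₂ x₃ x₄ (d - 1) le_rfl
  have hfin := (step (P := Param d0 d n)
      (fun (_ : Unit) (i : Fin n) => .inl i)
      (by simp) (layers d0 d n (d - 1)) (by
        rintro p i (⟨b, hb⟩ | ⟨m, i, j, hm, hb⟩)
        · simp at hb
        · simp at hb)
      _ _ _ _
      (hidden_measurable d0 d n x₁ (d - 1)) (hidden_measurable d0 d n x₂ (d - 1))
      (hidden_measurable d0 d n x₃ (d - 1)) (hidden_measurable d0 d n x₄ (d - 1))
      (hidden_dependsOn d0 d n x₁ (d - 1)) (hidden_dependsOn d0 d n x₂ (d - 1))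
      (hidden_dependsOn d0 d n x₃ (d - 1)) (hidden_dependsOn d0 d n x₄ (d - 1))
      (fun i j k l => (h i j k l).1) _ (fun i j k l => (h i j k l).2) () () () ()).2
  have hT : outT (cA (outT A B C (κ := Fin n))) (cB (outT A B C (κ := Fin n)))
      (cC (outT A B C (κ := Fin n))) () () () () =
      ((n : ℝ) ^ 2 + 2 * n) * (A + B + C) := by
    have := outT_sum (κ := Fin n) A B C
    rw [Fintype.card_fin] at this
    rw [← this]
    simp [outT]
  rw [hT, hs, contraction_sum d0 _ _ _ _ hd0] at hfin
  unfold net gaussParam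
  set c := (Real.sqrt ((n : ℝ) ^ d * (d0 : ℝ)))⁻¹ with hc
  have hn0 : (0 : ℝ) < n := by exact_mod_cast hn
  have hd00 : (0 : ℝ) < d0 := by exact_mod_cast hd0
  have hc2 : c ^ 2 = ((n : ℝ) ^ d * (d0 : ℝ))⁻¹ := by
    rw [hc, inv_pow, Real.sq_sqrt (by positivity)]
  have hre : ∀ a b e f : ℝ, c * a * (c * b) * (c * e) * (c * f) =
      (c ^ 2) ^ 2 * (a * b * e * f) := fun a b e f => by ring
  simp_rw [hre]
  rw [integral_const_mul]
  refine (congrArg (fun z => (c ^ 2) ^ 2 * z) hfin).trans ?_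
  have hpow : (1 + 2 / (n : ℝ)) ^ d = ((n : ℝ) ^ 2 + 2 * n) ^ d / ((n : ℝ) ^ d) ^ 2 := by
    rw [← pow_mul, mul_comm d 2, pow_mul, ← div_pow]
    congr 1
    field_simp
  obtain ⟨m, rfl⟩ : ∃ m, d = m + 1 := ⟨d - 1, by omega⟩
  simp only [Nat.add_sub_cancel]
  rw [hpow, hc2, pow_succ ((n : ℝ) ^ 2 + 2 * n) m]
  field_simp

lemma pow_bound (d : ℕ) (t : ℝ) (h0 : 0 ≤ t) (h1 : t ≤ 1) :
    1 ≤ (1 + 2 * t) ^ d ∧ (1 + 2 * t) ^ d - 1 ≤ (3 ^ d - 1) * t := by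
  induction d with
  | zero => simp
  | succ d ih =>
    obtain ⟨i1, i2⟩ := ih
    refine ⟨one_le_pow₀ (by linarith), ?_⟩
    have h3 : (1 : ℝ) ≤ 3 ^ d := one_le_pow₀ (by norm_num)
    rw [pow_succ, pow_succ]
    have : ((1 + 2 * t) ^ d - 1) * (1 + 2 * t) ≤ (3 ^ d - 1) * t * 3 := by
      apply mul_le_mul i2 (by linarith) (by linarith)
      have : (0 : ℝ) ≤ 3 ^ d - 1 := by linarith
      positivity
    nlinarith

/-- the connected four-point function of a deep linear fully connected
network is `O(1/n)`. -/
theorem deep_linear_fc_four_point (d0 d : ℕ) (hd0 : 0 < d0) (hd : 1 ≤ d)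
    (x₁ x₂ x₃ x₄ : Fin d0 → ℝ) :
    ∃ K : ℝ, ∀ n : ℕ, 1 ≤ n →
      |(∫ θ, net d0 d n θ x₁ * net d0 d n θ x₂ * net d0 d n θ x₃ * net d0 d n θ x₄
            ∂(gaussParam d0 d n))
          - (Kker d0 x₁ x₂ * Kker d0 x₃ x₄ + Kker d0 x₁ x₃ * Kker d0 x₂ x₄
              + Kker d0 x₁ x₄ * Kker d0 x₂ x₃)| ≤ K / (n : ℝ) := by
  refine ⟨(3 ^ d - 1) * |Kker d0 x₁ x₂ * Kker d0 x₃ x₄ + Kker d0 x₁ x₃ * Kker d0 x₂ x₄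
              + Kker d0 x₁ x₄ * Kker d0 x₂ x₃|, fun n hn => ?_⟩
  rw [four_point_exact d0 d n hd0 hd hn]
  set T := Kker d0 x₁ x₂ * Kker d0 x₃ x₄ + Kker d0 x₁ x₃ * Kker d0 x₂ x₄
              + Kker d0 x₁ x₄ * Kker d0 x₂ x₃
  have hn1 : (1 : ℝ) ≤ n := by exact_mod_cast hn
  obtain ⟨b1, b2⟩ := pow_bound d (1 / (n : ℝ)) (by positivity)
    (by rw [div_le_one (by linarith)]; exact hn1)
  have e : (1 + 2 / (n : ℝ)) ^ d * T - T = ((1 + 2 * (1 / (n : ℝ))) ^ d - 1) * T := by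
    rw [mul_one_div]; ring
  rw [e, abs_mul, abs_of_nonneg (by linarith)]
  calc _ ≤ (3 ^ d - 1) * (1 / (n : ℝ)) * |T| := by gcongr
    _ = _ := by ring

end DeepLinearFC
end

section
/- Let f be a one-hidden-layer network of width n with activation σ measurable and polynomially bounded. For inputs x_1, x_2, x_3, x_4 ∈ ℝ^{d_0}, set K_{ab} = E_{w∼N(0,I_{d_0})}[σ(d_0^{-1/2} w·x_a) σ(d_0^{-1/2} w·x_b)] and M = E_{w∼N(0,I_{d_0})}[Π_{a=1}^{4} σ(d_0^{-1/2} w·x_a)]. Then for all n ≥ 1, E_θ[f(x_1) f(x_2) f(x_3) f(x_4)] = (1 − 1/n)(K_{12}K_{34} + K_{13}K_{24} + K_{14}K_{23}) + (3/n) M. -/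
open MeasureTheory ProbabilityTheory

namespace OneHiddenLayer

/-- Parameter index type for a one-hidden-layer network of width `n` on inputs in `ℝ^{d0}`:
the input weight vectors `w_i` (`Fin n × Fin d0`) and the readout weights `v_i` (`Fin n`). -/
abbrev Param (d0 n : ℕ) : Type := (Fin n × Fin d0) ⊕ Fin n

/-- The one-hidden-layer network `f(x) = n^{-1/2} Σ_i v_i σ(d0^{-1/2} w_i ⬝ x)`. -/
noncomputable def net (σ : ℝ → ℝ) (d0 n : ℕ) (θ : Param d0 n → ℝ) (x : Fin d0 → ℝ) : ℝ :=
  (Real.sqrt (n : ℝ))⁻¹ * ∑ i : Fin n, θ (.inr i) *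
    σ ((Real.sqrt (d0 : ℝ))⁻¹ * ∑ j : Fin d0, θ (.inl (i, j)) * x j)

/-- All parameters are i.i.d. standard Gaussians. -/
noncomputable def gaussParam (d0 n : ℕ) : Measure (Param d0 n → ℝ) :=
  Measure.pi fun _ => gaussianReal 0 1

/-- A single standard Gaussian vector `w ∼ N(0, I_{d0})`. -/
noncomputable def gaussVec (d0 : ℕ) : Measure (Fin d0 → ℝ) :=
  Measure.pi fun _ => gaussianReal 0 1

/-- The neural tangent kernel `Θ(x,x') = Σ_μ ∂f(x)/∂θ_μ ⬝ ∂f(x')/∂θ_μ`. -/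
noncomputable def NTK (σ : ℝ → ℝ) (d0 n : ℕ) (θ : Param d0 n → ℝ) (x x' : Fin d0 → ℝ) : ℝ :=
  ∑ μ : Param d0 n,
    fderiv ℝ (fun θ' => net σ d0 n θ' x) θ (Pi.single μ 1) *
    fderiv ℝ (fun θ' => net σ d0 n θ' x') θ (Pi.single μ 1)

/-- The kernel `K_{ab} = E_w[σ(d0^{-1/2} w⬝x_a) σ(d0^{-1/2} w⬝x_b)]`. -/
noncomputable def Kker (σ : ℝ → ℝ) (d0 : ℕ) (x x' : Fin d0 → ℝ) : ℝ :=
  ∫ w, σ ((Real.sqrt (d0 : ℝ))⁻¹ * ∑ j : Fin d0, w j * x j) *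
    σ ((Real.sqrt (d0 : ℝ))⁻¹ * ∑ j : Fin d0, w j * x' j) ∂(gaussVec d0)

/-- Membership in every `L^p` with `p < ∞`. -/
def AllLp {Ω : Type*} [MeasurableSpace Ω] (μ : Measure Ω) (f : Ω → ℝ) : Prop :=
  ∀ p : ENNReal, p ≠ ⊤ → MemLp f p μ

section AllLpLemmas

variable {Ω : Type*} [MeasurableSpace Ω] {μ : Measure Ω} {f g : Ω → ℝ}

lemma AllLp.mul (hf : AllLp μ f) (hg : AllLp μ g) : AllLp μ (fun ω => f ω * g ω) := by
  intro p hp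
  have h2 : (2 * p : ENNReal) ≠ ⊤ := ENNReal.mul_ne_top (by simp) hp
  haveI : ENNReal.HolderTriple (2 * p) (2 * p) p := by
    constructor
    rw [ENNReal.mul_inv (by simp) (by simp), ← add_mul, ENNReal.inv_two_add_inv_two, one_mul]
  exact MemLp.mul' (hg _ h2) (hf _ h2)

lemma AllLp.const [IsProbabilityMeasure μ] (c : ℝ) : AllLp μ (fun _ => c) :=
  fun _ _ => memLp_const c

lemma AllLp.sum {ι : Type*} (s : Finset ι) {F : ι → Ω → ℝ} (h : ∀ i ∈ s, AllLp μ (F i)) :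
    AllLp μ (fun ω => ∑ i ∈ s, F i ω) :=
  fun p hp => memLp_finsetSum s fun i hi => h i hi p hp

lemma AllLp.prod [IsProbabilityMeasure μ] {ι : Type*} (s : Finset ι) {F : ι → Ω → ℝ}
    (h : ∀ i ∈ s, AllLp μ (F i)) :
    AllLp μ (fun ω => ∏ i ∈ s, F i ω) := by
  classical
  induction s using Finset.induction_on with
  | empty => simpa using AllLp.const 1
  | insert a s ha ih =>
    simp only [Finset.prod_insert ha]
    exact (h a (by simp)).mul (ih fun i hi => h i (by simp [hi]))

lemma AllLp.comp {Ω' : Type*} [MeasurableSpace Ω'] {ν : Measure Ω'} {T : Ω' → Ω}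
    (hf : AllLp μ f) (hT : MeasurePreserving T ν μ) : AllLp ν (fun ω => f (T ω)) :=
  fun p hp => (hf p hp).comp_measurePreserving hT

lemma AllLp.integrable (hf : AllLp μ f) : Integrable f μ :=
  memLp_one_iff_integrable.1 (hf 1 (by simp))

lemma AllLp.poly [IsProbabilityMeasure μ] (hf : AllLp μ f) {σ : ℝ → ℝ} (hσm : Measurable σ)
    (hσp : ∃ C : ℝ, ∃ r : ℕ, ∀ t : ℝ, |σ t| ≤ C * (1 + |t|) ^ r) (hfm : Measurable f) :
    AllLp μ (fun ω => σ (f ω)) := by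
  obtain ⟨C, r, hC⟩ := hσp
  have h1 : AllLp μ (fun ω => 1 + |f ω|) := fun p hp =>
    (memLp_const (1 : ℝ)).add (hf p hp).norm
  have h2 : AllLp μ (fun ω => C * ∏ _i ∈ Finset.range r, (1 + |f ω|)) :=
    (AllLp.const C).mul (AllLp.prod (Finset.range r) (fun _ _ => h1))
  intro p hp
  refine (h2 p hp).mono (hσm.comp hfm).aestronglyMeasurable (Filter.Eventually.of_forall ?_)
  intro ω
  simp only [Finset.prod_const, Finset.card_range, Real.norm_eq_abs]
  exact (hC _).trans (le_abs_self _)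

end AllLpLemmas

section Moments

variable {E : Type*} [MeasurableSpace E] {ν : Measure E} [IsProbabilityMeasure ν]

/-- Mixed moment of the partial sums. -/
noncomputable def mom (ν : Measure E) (G : E → Fin 4 → ℝ) {n : ℕ} (s : Finset (Fin n))
    (T : Finset (Fin 4)) : ℝ :=
  ∫ ω : Fin n → E, ∏ a ∈ T, ∑ i ∈ s, G (ω i) a ∂(Measure.pi fun _ => ν)

lemma mom_insert (G : E → Fin 4 → ℝ) (hGm : Measurable G)
    (hG : ∀ a, AllLp ν (fun e => G e a)) {n : ℕ} (s : Finset (Fin n)) (i : Fin n) (hi : i ∉ s)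
    (T : Finset (Fin 4)) :
    mom ν G (insert i s) T
      = ∑ U ∈ T.powerset, (∫ e, ∏ a ∈ U, G e a ∂ν) * mom ν G s (T \ U) := by
  unfold mom
  have hev : ∀ j : Fin n, MeasurePreserving (fun ω : Fin n → E => ω j)
      (Measure.pi fun _ => ν) ν := fun j => measurePreserving_eval (fun _ => ν) j
  have hL : ∀ (j : Fin n) a, AllLp (Measure.pi fun _ : Fin n => ν) (fun ω => G (ω j) a) :=
    fun j a => (hG a).comp (hev j)
  simp_rw [Finset.sum_insert hi, Finset.prod_add]
  rw [integral_finsetSum]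
  · refine Finset.sum_congr rfl fun U _ => ?_
    have hm : ∀ j : Fin n, Measurable (fun ω : Fin n → E => G (ω j)) :=
      fun j => hGm.comp (measurable_pi_apply j)
    have hI : iIndepFun (fun (j : Fin n) (ω : Fin n → E) => G (ω j)) (Measure.pi fun _ => ν) :=
      iIndepFun_pi (X := fun _ => G) (fun _ => hGm.aemeasurable)
    have hI2 := (hI.indepFun_finsetSum_of_notMem hm hi).symm
    have := hI2.integral_fun_comp_mul_comp (f := fun y : Fin 4 → ℝ => ∏ a ∈ U, y a)
      (g := fun y : Fin 4 → ℝ => ∏ a ∈ T \ U, y a) (hm i).aemeasurable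
      (by
        apply Measurable.aemeasurable
        have h := Finset.measurable_sum s (fun j _ => hm j)
        convert h using 1
        ext ω
        simp)
      (by apply Measurable.aestronglyMeasurable; fun_prop)
      (by apply Measurable.aestronglyMeasurable; fun_prop)
    simp only [Finset.sum_apply] at this
    rw [this]
    congr 1
    exact integral_comp_eval (μ := fun _ : Fin n => ν) (i := i) (f := fun e => ∏ a ∈ U, G e a)
      (by apply Measurable.aestronglyMeasurable; fun_prop)
  · intro U _
    exact ((AllLp.prod U fun a _ => hL i a).mul
      (AllLp.prod (T \ U) fun a _ => AllLp.sum s fun j _ => hL j a)).integrable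

lemma mom_empty_set (G : E → Fin 4 → ℝ) {n : ℕ} (s : Finset (Fin n)) : mom ν G s ∅ = 1 := by
  simp [mom]

lemma mom_empty (G : E → Fin 4 → ℝ) {n : ℕ} (T : Finset (Fin 4)) (hT : T.Nonempty) :
    mom ν G (∅ : Finset (Fin n)) T = 0 := by
  simp [mom, Finset.prod_const, hT.card_pos.ne']

lemma mom_odd (G : E → Fin 4 → ℝ) (hGm : Measurable G)
    (hG : ∀ a, AllLp ν (fun e => G e a))
    (hodd : ∀ U : Finset (Fin 4), Odd U.card → ∫ e, ∏ a ∈ U, G e a ∂ν = 0)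
    {n : ℕ} (s : Finset (Fin n)) (T : Finset (Fin 4)) (hT : Odd T.card) :
    mom ν G s T = 0 := by
  induction s using Finset.induction_on generalizing T with
  | empty => exact mom_empty G T (Finset.card_pos.1 hT.pos)
  | insert i s hi ih =>
    rw [mom_insert G hGm hG s i hi]
    refine Finset.sum_eq_zero fun U hU => ?_
    by_cases hUo : Odd U.card
    · rw [hodd U hUo, zero_mul]
    · rw [ih, mul_zero]
      have := Finset.card_sdiff_add_card_eq_card (Finset.mem_powerset.1 hU)
      grind

lemma mom_pair (G : E → Fin 4 → ℝ) (hGm : Measurable G)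
    (hG : ∀ a, AllLp ν (fun e => G e a))
    (hodd : ∀ U : Finset (Fin 4), Odd U.card → ∫ e, ∏ a ∈ U, G e a ∂ν = 0)
    {n : ℕ} (s : Finset (Fin n)) (T : Finset (Fin 4)) (hT : T.card = 2) :
    mom ν G s T = s.card * ∫ e, ∏ a ∈ T, G e a ∂ν := by
  induction s using Finset.induction_on with
  | empty => rw [mom_empty G T (Finset.card_pos.1 (by omega))]; simp
  | insert i s hi ih =>
    rw [mom_insert G hGm hG s i hi, Finset.card_insert_of_notMem hi]
    have hne : (∅ : Finset (Fin 4)) ≠ T := by rintro rfl; simp at hT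
    have hsub : ({∅, T} : Finset (Finset (Fin 4))) ⊆ T.powerset := by
      intro U hU
      simp only [Finset.mem_insert, Finset.mem_singleton] at hU
      rcases hU with rfl | rfl <;> simp
    rw [← Finset.sum_subset hsub, Finset.sum_pair hne]
    · simp only [Finset.prod_empty, Finset.sdiff_empty, ih, Finset.sdiff_self, mom_empty_set]
      simp
      ring
    · intro U hU hU'
      simp only [Finset.mem_insert, Finset.mem_singleton, not_or] at hU'
      rw [hodd, zero_mul]
      have h1 := Finset.card_lt_card ((Finset.mem_powerset.1 hU).ssubset_of_ne hU'.2)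
      have h2 := Finset.card_pos.2 (Finset.nonempty_iff_ne_empty.2 hU'.1)
      have : U.card = 1 := by omega
      rw [this]; exact odd_one

lemma sum_powerset_four (h : Finset (Fin 4) → ℝ) (hz : ∀ U, Odd U.card → h U = 0) :
    ∑ U ∈ (Finset.univ : Finset (Fin 4)).powerset, h U
      = h ∅ + h {0, 1} + h {0, 2} + h {0, 3} + h {1, 2} + h {1, 3} + h {2, 3} + h Finset.univ := by
  have hsub : ({∅, {0, 1}, {0, 2}, {0, 3}, {1, 2}, {1, 3}, {2, 3}, Finset.univ} :
      Finset (Finset (Fin 4))) ⊆ (Finset.univ : Finset (Fin 4)).powerset := by decide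
  rw [← Finset.sum_subset hsub]
  · repeat rw [Finset.sum_insert (by decide)]
    rw [Finset.sum_singleton]
    ring
  · intro U hU hU'
    apply hz
    revert U
    decide

lemma mom_four (G : E → Fin 4 → ℝ) (hGm : Measurable G)
    (hG : ∀ a, AllLp ν (fun e => G e a))
    (hodd : ∀ U : Finset (Fin 4), Odd U.card → ∫ e, ∏ a ∈ U, G e a ∂ν = 0)
    {n : ℕ} (s : Finset (Fin n)) (K : Finset (Fin 4) → ℝ)
    (hK : ∀ U, K U = ∫ e, ∏ a ∈ U, G e a ∂ν) :
    mom ν G s Finset.univ = s.card * (s.card - 1 : ℝ) *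
      (K {0, 1} * K {2, 3} + K {0, 2} * K {1, 3} + K {0, 3} * K {1, 2})
      + s.card * K Finset.univ := by
  induction s using Finset.induction_on with
  | empty => rw [mom_empty G _ (by simp)]; simp
  | insert i s hi ih =>
    rw [mom_insert G hGm hG s i hi, Finset.card_insert_of_notMem hi, sum_powerset_four]
    · have e1 : (Finset.univ \ {0, 1} : Finset (Fin 4)) = {2, 3} := by decide
      have e2 : (Finset.univ \ {0, 2} : Finset (Fin 4)) = {1, 3} := by decide
      have e3 : (Finset.univ \ {0, 3} : Finset (Fin 4)) = {1, 2} := by decide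
      have e4 : (Finset.univ \ {1, 2} : Finset (Fin 4)) = {0, 3} := by decide
      have e5 : (Finset.univ \ {1, 3} : Finset (Fin 4)) = {0, 2} := by decide
      have e6 : (Finset.univ \ {2, 3} : Finset (Fin 4)) = {0, 1} := by decide
      have hp : ∀ T : Finset (Fin 4), T.card = 2 → mom ν G s T = s.card * K T := by
        intro T hT; rw [hK]; exact mom_pair G hGm hG hodd s T hT
      have h0 : K ∅ = 1 := by rw [hK]; simp
      rw [e1, e2, e3, e4, e5, e6, Finset.sdiff_empty, Finset.sdiff_self, mom_empty_set, ih]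
      simp only [← hK, h0]
      rw [hp {0, 1} (by decide), hp {0, 2} (by decide), hp {0, 3} (by decide),
        hp {1, 2} (by decide), hp {1, 3} (by decide), hp {2, 3} (by decide)]
      push_cast
      ring
    · intro U hU; rw [hodd U hU, zero_mul]

end Moments

section Gauss

lemma gauss_moment (k : ℕ) :
    ∫ x, x ^ k ∂(gaussianReal 0 1) = iteratedDeriv k (fun t : ℝ => Real.exp (t ^ 2 / 2)) 0 := by
  have h := iteratedDeriv_mgf_zero (X := fun x : ℝ => x) (μ := gaussianReal 0 1) (by simp) k
  rw [mgf_fun_id_gaussianReal] at h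
  simp only [zero_mul, zero_add, NNReal.coe_one, one_mul] at h
  rw [h]
  rfl

lemma deriv_aux (p p' : ℝ → ℝ) (hp : ∀ t, HasDerivAt p (p' t) t) :
    deriv (fun t : ℝ => p t * Real.exp (t ^ 2 / 2))
      = fun t => (p' t + t * p t) * Real.exp (t ^ 2 / 2) := by
  ext t
  have h1 : HasDerivAt (fun t : ℝ => t ^ 2 / 2) t t := by
    have := ((hasDerivAt_id t).pow 2).div_const 2
    simpa using this
  have h := (hp t).mul h1.exp
  have h' := h.deriv
  calc _ = _ := h'
    _ = _ := by ring

lemma iter1 : deriv (fun t : ℝ => Real.exp (t ^ 2 / 2))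
    = fun t : ℝ => t * Real.exp (t ^ 2 / 2) := by
  have := deriv_aux (fun _ => 1) (fun _ => 0) (fun t => hasDerivAt_const t 1)
  simpa using this

lemma iter2 : deriv (fun t : ℝ => t * Real.exp (t ^ 2 / 2))
    = fun t : ℝ => (1 + t * t) * Real.exp (t ^ 2 / 2) :=
  deriv_aux (fun t => t) (fun _ => 1) (fun t => hasDerivAt_id t)

lemma iter3 : deriv (fun t : ℝ => (1 + t * t) * Real.exp (t ^ 2 / 2))
    = fun t : ℝ => ((1 * t + t * 1) + t * (1 + t * t)) * Real.exp (t ^ 2 / 2) :=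
  deriv_aux (fun t => 1 + t * t) (fun t => 1 * t + t * 1)
    (fun t => ((hasDerivAt_id t).mul (hasDerivAt_id t)).const_add 1)

lemma iter4 : deriv (fun t : ℝ => ((1 * t + t * 1) + t * (1 + t * t)) * Real.exp (t ^ 2 / 2)) 0
    = 3 := by
  have := deriv_aux (fun t => ((1 * t + t * 1) + t * (1 + t * t)))
    (fun t => (1 * 1 + 1 * 1) + (1 * (1 + t * t) + t * (1 * t + t * 1)))
    (fun t => (((hasDerivAt_id t).const_mul 1).add ((hasDerivAt_id t).mul_const 1)).add
      ((hasDerivAt_id t).mul (((hasDerivAt_id t).mul (hasDerivAt_id t)).const_add 1)))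
  rw [this]
  norm_num

lemma gauss1 : ∫ x, x ^ 1 ∂(gaussianReal 0 1) = 0 := by
  rw [gauss_moment]; simp [iteratedDeriv_succ, iteratedDeriv_zero, iter1]

lemma gauss2 : ∫ x, x ^ 2 ∂(gaussianReal 0 1) = 1 := by
  rw [gauss_moment]; simp [iteratedDeriv_succ, iteratedDeriv_zero, iter1, iter2]

lemma gauss3 : ∫ x, x ^ 3 ∂(gaussianReal 0 1) = 0 := by
  rw [gauss_moment]
  simp only [iteratedDeriv_succ, iteratedDeriv_zero, iter1, iter2, iter3]; simp

lemma gauss4 : ∫ x, x ^ 4 ∂(gaussianReal 0 1) = 3 := by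
  rw [gauss_moment]
  simp only [iteratedDeriv_succ, iteratedDeriv_zero, iter1, iter2, iter3, iter4]

lemma gauss_allLp : AllLp (gaussianReal 0 1) (fun x => x) :=
  fun p hp => memLp_id_gaussianReal' p hp

end Gauss

instance (d0 : ℕ) : IsProbabilityMeasure (gaussVec d0) := by
  unfold gaussVec; infer_instance

/-- Law of a single neuron's parameters. -/
noncomputable def neuron (d0 : ℕ) : Measure (ℝ × (Fin d0 → ℝ)) :=
  (gaussianReal 0 1).prod (gaussVec d0)

instance (d0 : ℕ) : IsProbabilityMeasure (neuron d0) := by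
  unfold neuron; infer_instance

/-- Assemble all parameters from the per-neuron ones. -/
def assemble (d0 n : ℕ) (ω : Fin n → ℝ × (Fin d0 → ℝ)) : Param d0 n → ℝ
  | .inl (i, j) => (ω i).2 j
  | .inr i => (ω i).1

lemma measurable_assemble (d0 n : ℕ) : Measurable (assemble d0 n) := by
  refine measurable_pi_lambda _ fun q => ?_
  rcases q with ⟨i, j⟩ | i
  · exact (measurable_pi_apply j).comp (measurable_snd.comp (measurable_pi_apply i))
  · exact measurable_fst.comp (measurable_pi_apply i)

lemma map_assemble (d0 n : ℕ) :
    (Measure.pi fun _ : Fin n => neuron d0).map (assemble d0 n) = gaussParam d0 n := by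
  unfold gaussParam
  refine (Measure.pi_eq fun s hs => ?_).symm
  rw [Measure.map_apply (measurable_assemble d0 n) (MeasurableSet.univ_pi hs)]
  have : assemble d0 n ⁻¹' (Set.univ.pi s)
      = Set.univ.pi fun i => s (.inr i) ×ˢ Set.univ.pi fun j => s (.inl (i, j)) := by
    ext ω
    simp only [Set.mem_preimage, Set.mem_univ_pi, Set.mem_prod]
    constructor
    · intro h i
      exact ⟨h (.inr i), fun j => h (.inl (i, j))⟩
    · rintro h (⟨i, j⟩ | i)
      · exact (h i).2 j
      · exact (h i).1
  rw [this, Measure.pi_pi]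
  simp only [neuron, gaussVec, Measure.prod_prod, Measure.pi_pi, Finset.prod_mul_distrib,
    Fintype.prod_sum_type, Fintype.prod_prod_type]
  rw [mul_comm]

/-- Contribution of one neuron at the four inputs. -/
noncomputable def contrib (σ : ℝ → ℝ) (d0 : ℕ) (x : Fin 4 → Fin d0 → ℝ)
    (e : ℝ × (Fin d0 → ℝ)) (a : Fin 4) : ℝ :=
  e.1 * σ ((Real.sqrt (d0 : ℝ))⁻¹ * ∑ j : Fin d0, e.2 j * x a j)

lemma measurable_contrib (σ : ℝ → ℝ) (hσm : Measurable σ) (d0 : ℕ) (x : Fin 4 → Fin d0 → ℝ) :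
    Measurable (contrib σ d0 x) := by
  refine measurable_pi_lambda _ fun a => ?_
  unfold contrib
  fun_prop

lemma contrib_allLp (σ : ℝ → ℝ) (hσm : Measurable σ)
    (hσp : ∃ C : ℝ, ∃ r : ℕ, ∀ t : ℝ, |σ t| ≤ C * (1 + |t|) ^ r)
    (d0 : ℕ) (x : Fin 4 → Fin d0 → ℝ) (a : Fin 4) :
    AllLp (neuron d0) (fun e => contrib σ d0 x e a) := by
  unfold contrib
  have h1 : MeasurePreserving (Prod.fst : ℝ × (Fin d0 → ℝ) → ℝ) (neuron d0) (gaussianReal 0 1) :=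
    measurePreserving_fst
  have h2 : MeasurePreserving (Prod.snd : ℝ × (Fin d0 → ℝ) → _) (neuron d0) (gaussVec d0) :=
    measurePreserving_snd
  have h3 : ∀ j : Fin d0, MeasurePreserving (fun w : Fin d0 → ℝ => w j) (gaussVec d0)
      (gaussianReal 0 1) := fun j => measurePreserving_eval (fun _ => gaussianReal 0 1) j
  refine (gauss_allLp.comp h1).mul (AllLp.poly ?_ hσm hσp (by fun_prop))
  exact (AllLp.const _).mul (AllLp.sum _ fun j _ =>
    (gauss_allLp.comp ((h3 j).comp h2)).mul (AllLp.const _))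

lemma contrib_moment (σ : ℝ → ℝ) (d0 : ℕ) (x : Fin 4 → Fin d0 → ℝ) (U : Finset (Fin 4)) :
    ∫ e, ∏ a ∈ U, contrib σ d0 x e a ∂(neuron d0)
      = (∫ v, v ^ U.card ∂(gaussianReal 0 1)) *
        ∫ w, ∏ a ∈ U, σ ((Real.sqrt (d0 : ℝ))⁻¹ * ∑ j : Fin d0, w j * x a j) ∂(gaussVec d0) := by
  unfold contrib neuron
  simp only [Finset.prod_mul_distrib, Finset.prod_const]
  exact integral_prod_mul (fun v : ℝ => v ^ U.card) (fun w : Fin d0 → ℝ =>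
    ∏ a ∈ U, σ ((Real.sqrt (d0 : ℝ))⁻¹ * ∑ j : Fin d0, w j * x a j))

/-- exact four-point function of a one-hidden-layer network:
`E_θ[f(x₁)f(x₂)f(x₃)f(x₄)] = (1 - 1/n)(K₁₂K₃₄ + K₁₃K₂₄ + K₁₄K₂₃) + (3/n) M`. -/
theorem one_hidden_layer_four_point (σ : ℝ → ℝ) (hσm : Measurable σ)
    (hσp : ∃ C : ℝ, ∃ r : ℕ, ∀ t : ℝ, |σ t| ≤ C * (1 + |t|) ^ r)
    (d0 : ℕ) (hd0 : 0 < d0) (x₁ x₂ x₃ x₄ : Fin d0 → ℝ) (n : ℕ) (hn : 1 ≤ n) :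
    ∫ θ, net σ d0 n θ x₁ * net σ d0 n θ x₂ * net σ d0 n θ x₃ * net σ d0 n θ x₄
        ∂(gaussParam d0 n)
      = (1 - 1 / (n : ℝ)) *
          (Kker σ d0 x₁ x₂ * Kker σ d0 x₃ x₄ + Kker σ d0 x₁ x₃ * Kker σ d0 x₂ x₄
            + Kker σ d0 x₁ x₄ * Kker σ d0 x₂ x₃)
        + (3 / (n : ℝ)) *
          ∫ w, σ ((Real.sqrt (d0 : ℝ))⁻¹ * ∑ j : Fin d0, w j * x₁ j) *
            σ ((Real.sqrt (d0 : ℝ))⁻¹ * ∑ j : Fin d0, w j * x₂ j) *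
            σ ((Real.sqrt (d0 : ℝ))⁻¹ * ∑ j : Fin d0, w j * x₃ j) *
            σ ((Real.sqrt (d0 : ℝ))⁻¹ * ∑ j : Fin d0, w j * x₄ j) ∂(gaussVec d0) := by
  have hn0 : (n : ℝ) ≠ 0 := by positivity
  set x : Fin 4 → Fin d0 → ℝ := ![x₁, x₂, x₃, x₄] with hx
  have hnet : ∀ ω a, net σ d0 n (assemble d0 n ω) (x a)
      = (Real.sqrt (n : ℝ))⁻¹ * ∑ i : Fin n, contrib σ d0 x (ω i) a := fun _ _ => rfl
  have hmn : ∀ y, Measurable (fun θ => net σ d0 n θ y) := by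
    intro y; unfold net; fun_prop
  have hodd : ∀ U : Finset (Fin 4), Odd U.card →
      ∫ e, ∏ a ∈ U, contrib σ d0 x e a ∂(neuron d0) = 0 := by
    intro U hU
    rw [contrib_moment]
    have hle : U.card ≤ 4 := by simpa using Finset.card_le_univ U
    have : U.card = 1 ∨ U.card = 3 := by
      obtain ⟨k, hk⟩ := hU; omega
    rcases this with h | h <;> rw [h]
    · rw [gauss1, zero_mul]
    · rw [gauss3, zero_mul]
  have key := mom_four (contrib σ d0 x) (measurable_contrib σ hσm d0 x)
    (contrib_allLp σ hσm hσp d0 x) hodd (Finset.univ : Finset (Fin n)) _ (fun U => rfl)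
  simp only [contrib_moment] at key
  have hc : ∀ a b : Fin 4, a ≠ b → ({a, b} : Finset (Fin 4)).card = 2 :=
    fun a b h => Finset.card_pair h
  have hP : ∀ a b : Fin 4, a ≠ b →
      (∫ v, v ^ ({a, b} : Finset (Fin 4)).card ∂(gaussianReal 0 1)) *
        ∫ w, ∏ c ∈ ({a, b} : Finset (Fin 4)),
          σ ((Real.sqrt (d0 : ℝ))⁻¹ * ∑ j : Fin d0, w j * x c j) ∂(gaussVec d0)
        = Kker σ d0 (x a) (x b) := by
    intro a b h
    rw [hc a b h, gauss2, one_mul]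
    simp only [Finset.prod_pair h]
    rfl
  rw [hP 0 1 (by decide), hP 0 2 (by decide), hP 0 3 (by decide), hP 1 2 (by decide),
    hP 1 3 (by decide), hP 2 3 (by decide)] at key
  simp only [Finset.card_univ, Fintype.card_fin, gauss4, Fin.prod_univ_four] at key
  rw [← map_assemble, integral_map (measurable_assemble d0 n).aemeasurable
    (by
      apply Measurable.aestronglyMeasurable
      exact (((hmn _).mul (hmn _)).mul (hmn _)).mul (hmn _))]
  have hlhs : ∫ ω, net σ d0 n (assemble d0 n ω) x₁ * net σ d0 n (assemble d0 n ω) x₂ *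
      net σ d0 n (assemble d0 n ω) x₃ * net σ d0 n (assemble d0 n ω) x₄
        ∂(Measure.pi fun _ : Fin n => neuron d0)
      = ((n : ℝ)⁻¹ * (n : ℝ)⁻¹) * mom (neuron d0) (contrib σ d0 x) (Finset.univ : Finset (Fin n))
          Finset.univ := by
    unfold mom
    rw [← integral_const_mul]
    refine integral_congr_ae (Filter.Eventually.of_forall fun ω => ?_)
    have h0 := hnet ω 0
    have h1 := hnet ω 1
    have h2 := hnet ω 2
    have h3 := hnet ω 3
    change net σ d0 n (assemble d0 n ω) x₁ = _ at h0
    change net σ d0 n (assemble d0 n ω) x₂ = _ at h1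
    change net σ d0 n (assemble d0 n ω) x₃ = _ at h2
    change net σ d0 n (assemble d0 n ω) x₄ = _ at h3
    have hs : (Real.sqrt (n : ℝ))⁻¹ * (Real.sqrt (n : ℝ))⁻¹ = (n : ℝ)⁻¹ := by
      rw [← mul_inv, Real.mul_self_sqrt (Nat.cast_nonneg n)]
    simp only [h0, h1, h2, h3, Fin.prod_univ_four, ← hs]
    ring
  rw [hlhs, key]
  change _ = (1 - 1 / (n : ℝ)) *
          (Kker σ d0 (x 0) (x 1) * Kker σ d0 (x 2) (x 3)
            + Kker σ d0 (x 0) (x 2) * Kker σ d0 (x 1) (x 3)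
            + Kker σ d0 (x 0) (x 3) * Kker σ d0 (x 1) (x 2))
        + (3 / (n : ℝ)) *
          ∫ w, σ ((Real.sqrt (d0 : ℝ))⁻¹ * ∑ j : Fin d0, w j * x 0 j) *
            σ ((Real.sqrt (d0 : ℝ))⁻¹ * ∑ j : Fin d0, w j * x 1 j) *
            σ ((Real.sqrt (d0 : ℝ))⁻¹ * ∑ j : Fin d0, w j * x 2 j) *
            σ ((Real.sqrt (d0 : ℝ))⁻¹ * ∑ j : Fin d0, w j * x 3 j) ∂(gaussVec d0)
  field_simp

end OneHiddenLayer
end
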